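/- arXiv:1512.02068 — 2 statements merged into one kernel-verified Lean document; each statement's English description precedes it below -/
import Mathlib

section
/- Let G be a finite directed graph with nonnegative real arc weights, let P be a shortest u-to-v path, and let C be a directed cycle of minimum total weight among all directed cycles of G that passes through two distinct vertices c1 and c2 of P, where c1 occurs strictly before c2 along P. Then the closed walk obtained from C by replacing a c1-to-c2 portion of C with the subpath P[c1,c2] of P has total weight at most the weight of C; consequently, this closed walk contains a directed cycle whose total weight equals the minimum cycle weight of G. -/
/-!
Every walk contains a path with the same ends whose arcs form a subsequence of its arcs
(`DiWalk.exists_path`), so with nonnegative weights the shortest path `P` is no heavier than *any*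
`u`-to-`v` walk. Comparing `P` with the walk `P1 W1 P3` gives `wt P2 ≤ wt W1`, hence
`wt (P2 W2) ≤ wt C`. Since `c1 ≠ c2`, the closed walk `P2 W2` is nontrivial; keeping its first arc
and reducing the rest to a path yields a directed cycle inside it (`DiWalk.exists_cycle`). That
cycle weighs at most `wt (P2 W2) ≤ wt C`, and at least `wt C` by minimality of `C`.
-/

/-- A directed walk in a digraph given by an adjacency relation `G`. -/
inductive DiWalk {V : Type*} (G : V → V → Prop) : V → V → Type _
  | nil (u : V) : DiWalk G u u
  | cons {u v x : V} (h : G u v) (p : DiWalk G v x) : DiWalk G u x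

namespace DiWalk

variable {V : Type*} {G : V → V → Prop}

/-- The list of arcs of a walk, in order. -/
def arcs : {u v : V} → DiWalk G u v → List (V × V)
  | _, _, .nil _ => []
  | _, _, @DiWalk.cons _ _ a b _ _ p => (a, b) :: arcs p

/-- The list of vertices visited by a walk, in order (with multiplicity). -/
def support : {u v : V} → DiWalk G u v → List V
  | _, _, .nil a => [a]
  | _, _, @DiWalk.cons _ _ a _ _ _ p => a :: support p

/-- Concatenation of walks. -/
def append : {u v x : V} → DiWalk G u v → DiWalk G v x → DiWalk G u x
  | _, _, _, .nil _, q => q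
  | _, _, _, .cons h p, q => .cons h (append p q)

/-- The total weight of a walk: the sum of the weights of its arcs. -/
def weight (wt : V → V → ℝ) {u v : V} (p : DiWalk G u v) : ℝ :=
  (p.arcs.map fun e => wt e.1 e.2).sum

/-- The number of arcs of a walk. -/
def length {u v : V} (p : DiWalk G u v) : ℕ := p.arcs.length

/-- A walk is a (simple directed) path if it repeats no vertex. -/
def IsPath {u v : V} (p : DiWalk G u v) : Prop := p.support.Nodup

/-- A closed walk is a directed cycle if it is nontrivial and repeats no vertex
other than its common first and last vertex. -/
def IsCycle {u : V} (p : DiWalk G u u) : Prop :=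
  1 ≤ p.length ∧ p.support.dropLast.Nodup

end DiWalk

namespace DiWalk

variable {V : Type*} {G : V → V → Prop}

theorem arcs_append {u v x : V} (p : DiWalk G u v) (q : DiWalk G v x) :
    (p.append q).arcs = p.arcs ++ q.arcs := by
  induction p with
  | nil a => simp [append, arcs]
  | cons h p ih => simp [append, arcs, ih]

theorem weight_append (wt : V → V → ℝ) {u v x : V} (p : DiWalk G u v) (q : DiWalk G v x) :
    (p.append q).weight wt = p.weight wt + q.weight wt := by
  simp [weight, arcs_append]

theorem weight_le_of_sublist {wt : V → V → ℝ} (hw : ∀ a b : V, 0 ≤ wt a b)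
    {a b c d : V} {p : DiWalk G a b} {q : DiWalk G c d} (h : List.Sublist p.arcs q.arcs) :
    p.weight wt ≤ q.weight wt := by
  refine List.Sublist.sum_le_sum (h.map _) ?_
  intro r hr
  obtain ⟨e, -, rfl⟩ := List.mem_map.1 hr
  exact hw _ _

theorem support_eq_dropLast_append {u v : V} (p : DiWalk G u v) :
    p.support = p.support.dropLast ++ [v] := by
  induction p with
  | nil a => simp [support]
  | cons h p ih =>
    have hp : p.support ≠ [] := by cases p <;> simp [support]
    rw [support, List.dropLast_cons_of_ne_nil hp, List.cons_append, ← ih]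

/-- The tail of a walk starting at a vertex it visits. -/
theorem exists_suffix {u v a : V} (p : DiWalk G u v) (ha : a ∈ p.support) :
    ∃ q : DiWalk G a v, List.Sublist q.support p.support ∧ List.Sublist q.arcs p.arcs := by
  induction p with
  | nil b =>
    obtain rfl : a = b := by simpa [support] using ha
    exact ⟨nil a, List.Sublist.refl _, List.Sublist.refl _⟩
  | @cons b c d h p ih =>
    rw [support, List.mem_cons] at ha
    rcases ha with rfl | ha
    · exact ⟨cons h p, List.Sublist.refl _, List.Sublist.refl _⟩
    · obtain ⟨q, hs, hq⟩ := ih ha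
      exact ⟨q, hs.cons _, hq.cons _⟩

theorem exists_path {u v : V} (p : DiWalk G u v) :
    ∃ q : DiWalk G u v, q.IsPath ∧ List.Sublist q.arcs p.arcs := by
  induction p with
  | nil a => exact ⟨nil a, by simp [IsPath, support], List.Sublist.refl _⟩
  | @cons a b c h p ih =>
    obtain ⟨q, hq, hs⟩ := ih
    by_cases ha : a ∈ q.support
    · obtain ⟨r, hr, hr'⟩ := exists_suffix q ha
      exact ⟨r, List.Nodup.sublist hr hq, (hr'.trans hs).cons _⟩
    · exact ⟨cons h q, List.nodup_cons.2 ⟨ha, hq⟩, hs.cons_cons _⟩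

theorem exists_cycle {u : V} (p : DiWalk G u u) (hp : p.arcs ≠ []) :
    ∃ q : DiWalk G u u, q.IsCycle ∧ List.Sublist q.arcs p.arcs := by
  cases p with
  | nil => simp [arcs] at hp
  | cons h p =>
    obtain ⟨q, hq, hs⟩ := exists_path p
    refine ⟨cons h q, ⟨by simp [length, arcs], ?_⟩, hs.cons_cons _⟩
    -- Dropping the last vertex of the closed walk and dropping its first one leave the same
    -- vertices, and the latter list is the support of the path `q`.
    have hne : q.support ≠ [] := by cases q <;> simp [support]
    rw [support, List.dropLast_cons_of_ne_nil hne]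
    rw [IsPath, support_eq_dropLast_append q] at hq
    exact (List.perm_append_singleton _ _).nodup_iff.1 hq

end DiWalk

/-- Let `P` be a shortest `u`-to-`v` path and let `C` be a minimum-weight
directed cycle passing through two distinct vertices `c1`, `c2` of `P` with `c1` strictly
before `c2` along `P` (witnessed by the decomposition `P = P1 ++ P2 ++ P3` with
`P2 : c1 → c2`, and a decomposition of `C` into `W1 : c1 → c2` followed by `W2 : c2 → c1`
up to rotation).  Then the closed walk obtained from `C` by replacing the `c1`-to-`c2`
portion `W1` with the subpath `P2 = P[c1,c2]` has total weight at most the weight of `C`;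
consequently it contains (as a cyclic subsequence of its arcs) a directed cycle whose
total weight equals the minimum cycle weight of `G`, i.e. the weight of `C`. -/
theorem replace_portion_of_min_cycle_by_shortest_subpath
    {V : Type*} [Fintype V] (G : V → V → Prop) (wt : V → V → ℝ)
    (hw : ∀ a b : V, 0 ≤ wt a b)
    {u v : V} (P : DiWalk G u v) (hP : P.IsPath)
    (hPmin : ∀ Q : DiWalk G u v, Q.IsPath → P.weight wt ≤ Q.weight wt)
    {o : V} (C : DiWalk G o o) (hC : C.IsCycle)
    (hCmin : ∀ (o' : V) (C' : DiWalk G o' o'), C'.IsCycle → C.weight wt ≤ C'.weight wt)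
    {c1 c2 : V} (hne : c1 ≠ c2)
    (P1 : DiWalk G u c1) (P2 : DiWalk G c1 c2) (P3 : DiWalk G c2 v)
    (hPdecomp : P.arcs = P1.arcs ++ P2.arcs ++ P3.arcs)
    (W1 : DiWalk G c1 c2) (W2 : DiWalk G c2 c1)
    (hCdecomp : (W1.arcs ++ W2.arcs) ~r C.arcs) :
    (P2.append W2).weight wt ≤ C.weight wt ∧
      ∃ (o' : V) (C' : DiWalk G o' o'), C'.IsCycle ∧
        (∃ l : List (V × V), l ~r (P2.append W2).arcs ∧ List.Sublist C'.arcs l) ∧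
        C'.weight wt = C.weight wt := by
  have hPwalk : P.weight wt ≤ (P1.append (W1.append P3)).weight wt := by
    obtain ⟨Q, hQ, hs⟩ := (P1.append (W1.append P3)).exists_path
    exact (hPmin Q hQ).trans (DiWalk.weight_le_of_sublist hw hs)
  have hPw : P.weight wt = P1.weight wt + P2.weight wt + P3.weight wt := by
    simp [DiWalk.weight, hPdecomp, add_assoc]
  have hCw : W1.weight wt + W2.weight wt = C.weight wt := by
    have := (hCdecomp.perm.map fun e => wt e.1 e.2).sum_eq
    simpa [DiWalk.weight] using this
  have hle : (P2.append W2).weight wt ≤ C.weight wt := by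
    simp only [DiWalk.weight_append] at hPwalk ⊢
    linarith
  refine ⟨hle, ?_⟩
  have hnil : (P2.append W2).arcs ≠ [] := by
    rw [DiWalk.arcs_append]
    cases P2 with
    | nil => exact absurd rfl hne
    | cons h p => simp [DiWalk.arcs]
  obtain ⟨C', hC', hs⟩ := (P2.append W2).exists_cycle hnil
  exact ⟨c1, C', hC', ⟨_, List.IsRotated.refl _, hs⟩,
    le_antisymm ((DiWalk.weight_le_of_sublist hw hs).trans hle) (hCmin _ C' hC')⟩
end

section
/- Let G be a finite directed graph with nonnegative real arc weights. Let Q be a shortest path in G and let R be a shortest c-to-d path that shares at least one vertex with Q. Let q1 be the first vertex along R that lies on Q and let q2 be the last vertex along R that lies on Q, and suppose q1 occurs no later than q2 along Q. Then the concatenation of R[c,q1], Q[q1,q2], and R[q2,d] is a simple directed path from c to d whose total weight is at most the weight of R (hence it is also a shortest c-to-d path), and the vertices it shares with Q are exactly the vertices of the subpath Q[q1,q2]. -/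
namespace DiWalk

variable {V : Type*} {G : V → V → Prop}

/-- The support is determined by the start vertex and the arcs; this turns a decomposition of the
arc list into one of the support, even for walks that are not syntactically concatenations. -/
theorem support_eq_cons_arcs {u v : V} (p : DiWalk G u v) :
    p.support = u :: p.arcs.map Prod.snd := by
  induction p with
  | nil => rfl
  | cons h p ih => simp [support, arcs, ih]

theorem support_append {u v x : V} (p : DiWalk G u v) (q : DiWalk G v x) :
    (p.append q).support = p.support.dropLast ++ q.support := by
  induction p with
  | nil => simp [append, support]
  | cons h p ih =>
    have hne : p.support ≠ [] := by simp [support_eq_cons_arcs]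
    simp [append, support, ih, List.dropLast_cons_of_ne_nil hne]

theorem support_append' {u v x : V} (p : DiWalk G u v) (q : DiWalk G v x) :
    (p.append q).support = p.support ++ q.support.tail := by
  simp [support_eq_cons_arcs, arcs_append]

theorem support_append_append {u v x y : V} (p : DiWalk G u v) (q : DiWalk G v x)
    (r : DiWalk G x y) :
    (p.append (q.append r)).support = p.support.dropLast ++ (q.support ++ r.support.tail) := by
  rw [support_append, support_append']

theorem support_of_arcs_eq {u v x y : V} {s : DiWalk G u y} {p : DiWalk G u v} {q : DiWalk G v x}
    {r : DiWalk G x y} (h : s.arcs = p.arcs ++ q.arcs ++ r.arcs) :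
    s.support = p.support.dropLast ++ (q.support ++ r.support.tail) := by
  rw [← support_append_append, support_eq_cons_arcs, support_eq_cons_arcs, h, arcs_append,
    arcs_append, List.append_assoc]

theorem weight_of_arcs_eq (wt : V → V → ℝ) {u v x y : V} {s : DiWalk G u y} {p : DiWalk G u v}
    {q : DiWalk G v x} {r : DiWalk G x y} (h : s.arcs = p.arcs ++ q.arcs ++ r.arcs) :
    s.weight wt = p.weight wt + q.weight wt + r.weight wt := by
  simp [weight, h, add_assoc]

theorem weight_cons (wt : V → V → ℝ) {u v x : V} (h : G u v) (p : DiWalk G v x) :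
    (DiWalk.cons h p).weight wt = wt u v + p.weight wt := by
  simp [weight, arcs]

/-- The witness is the final segment of `p` starting at `u`. -/
theorem IsPath.exists_suffix {wt : V → V → ℝ} (hw : ∀ a b : V, 0 ≤ wt a b) {v x : V}
    {p : DiWalk G v x} (hp : p.IsPath) {u : V} (hu : u ∈ p.support) :
    ∃ q : DiWalk G u x, q.IsPath ∧ q.weight wt ≤ p.weight wt := by
  induction p with
  | nil v =>
    obtain rfl : u = v := by simpa [support] using hu
    exact ⟨.nil u, hp, le_rfl⟩
  | @cons v y x h p ih =>
    by_cases huv : u = v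
    · subst huv
      exact ⟨.cons h p, hp, le_rfl⟩
    · obtain ⟨q, hq, hqw⟩ := ih (List.nodup_cons.1 hp).2 ((List.mem_cons.1 hu).resolve_left huv)
      refine ⟨q, hq, ?_⟩
      rw [weight_cons]
      linarith [hw v y]

/-- With nonnegative weights, removing closed subwalks turns a walk into a path that is no
heavier. -/
theorem exists_isPath_weight_le {wt : V → V → ℝ} (hw : ∀ a b : V, 0 ≤ wt a b) {u x : V}
    (p : DiWalk G u x) : ∃ q : DiWalk G u x, q.IsPath ∧ q.weight wt ≤ p.weight wt := by
  induction p with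
  | nil u => exact ⟨.nil u, by simp [IsPath, support], le_rfl⟩
  | @cons u v x h p ih =>
    obtain ⟨q, hq, hqw⟩ := ih
    by_cases hu : u ∈ q.support
    · obtain ⟨r, hr, hrw⟩ := hq.exists_suffix hw hu
      refine ⟨r, hr, ?_⟩
      rw [weight_cons]
      linarith [hw u v]
    · refine ⟨.cons h q, List.nodup_cons.2 ⟨hu, hq⟩, ?_⟩
      rw [weight_cons, weight_cons]
      linarith

end DiWalk

/-- Let `Q` be a shortest path and `R` a shortest `c`-to-`d` path
sharing at least one vertex with `Q`.  Let `q1` be the first vertex along `R` lying on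
`Q` and `q2` the last (witnessed by the decomposition `R = R1 ++ R2 ++ R3` with
`R1 : c → q1`, `R3 : q2 → d`, no vertex of `R1` before `q1` on `Q`, and no vertex of
`R3` after `q2` on `Q`), and suppose `q1` occurs no later than `q2` along `Q`
(witnessed by the decomposition `Q = Q1 ++ Q2 ++ Q3` with `Q2 : q1 → q2`).  Then the
concatenation `R1 ++ Q2 ++ R3` of `R[c,q1]`, `Q[q1,q2]`, `R[q2,d]` is a simple directed
path from `c` to `d` of total weight at most that of `R` (hence itself a shortest
`c`-to-`d` path), and the vertices it shares with `Q` are exactly those of `Q[q1,q2]`. -/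
theorem reroute_shortest_path_along_shortest_path
    {V : Type*} [Fintype V] (G : V → V → Prop) (wt : V → V → ℝ)
    (hw : ∀ a b : V, 0 ≤ wt a b)
    {a b : V} (Q : DiWalk G a b) (hQ : Q.IsPath)
    (hQmin : ∀ S : DiWalk G a b, S.IsPath → Q.weight wt ≤ S.weight wt)
    {c d : V} (R : DiWalk G c d) (hR : R.IsPath)
    (hRmin : ∀ S : DiWalk G c d, S.IsPath → R.weight wt ≤ S.weight wt)
    {q1 q2 : V}
    (R1 : DiWalk G c q1) (R2 : DiWalk G q1 q2) (R3 : DiWalk G q2 d)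
    (hRdecomp : R.arcs = R1.arcs ++ R2.arcs ++ R3.arcs)
    (hq1Q : q1 ∈ Q.support) (hq2Q : q2 ∈ Q.support)
    (hfirst : ∀ x ∈ R1.support.dropLast, x ∉ Q.support)
    (hlast : ∀ x ∈ R3.support.tail, x ∉ Q.support)
    (Q1 : DiWalk G a q1) (Q2 : DiWalk G q1 q2) (Q3 : DiWalk G q2 b)
    (hQdecomp : Q.arcs = Q1.arcs ++ Q2.arcs ++ Q3.arcs) :
    (R1.append (Q2.append R3)).IsPath ∧
    (R1.append (Q2.append R3)).weight wt ≤ R.weight wt ∧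
    (∀ S : DiWalk G c d, S.IsPath → (R1.append (Q2.append R3)).weight wt ≤ S.weight wt) ∧
    (∀ x : V, (x ∈ (R1.append (Q2.append R3)).support ∧ x ∈ Q.support) ↔ x ∈ Q2.support) := by
  have hQs := DiWalk.support_of_arcs_eq hQdecomp
  have hRs := DiWalk.support_of_arcs_eq hRdecomp
  have hQ2Q : ∀ x ∈ Q2.support, x ∈ Q.support := fun x hx => by simp [hQs, hx]
  have hle : (R1.append (Q2.append R3)).weight wt ≤ R.weight wt := by
    -- Compare `Q` with the walk obtained from it by the detour along `R[q1,q2]`.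
    obtain ⟨S, hS, hSw⟩ := DiWalk.exists_isPath_weight_le hw (Q1.append (R2.append Q3))
    have h := (hQmin S hS).trans hSw
    rw [DiWalk.weight_of_arcs_eq wt hQdecomp, DiWalk.weight_append, DiWalk.weight_append] at h
    rw [DiWalk.weight_of_arcs_eq wt hRdecomp, DiWalk.weight_append, DiWalk.weight_append]
    linarith
  refine ⟨?_, hle, fun S hS => hle.trans (hRmin S hS), fun x => ?_⟩
  · unfold DiWalk.IsPath at hQ hR ⊢
    rw [hQs] at hQ
    rw [hRs] at hR
    have hQ2 : Q2.support.Nodup := hQ.of_append_right.of_append_left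
    rw [DiWalk.support_append_append]
    rw [List.nodup_append', List.nodup_append'] at hR ⊢
    obtain ⟨h1, ⟨-, h3, -⟩, hd⟩ := hR
    refine ⟨h1, ⟨hQ2, h3, fun x hx hx3 => hlast x hx3 (hQ2Q x hx)⟩, fun x hx hx' => ?_⟩
    rcases List.mem_append.1 hx' with hx2 | hx3
    · exact hfirst x hx (hQ2Q x hx2)
    · exact hd hx (List.mem_append_right _ hx3)
  · rw [DiWalk.support_append_append, List.mem_append, List.mem_append]
    constructor
    · rintro ⟨h | h | h, hxQ⟩
      · exact absurd hxQ (hfirst x h)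
      · exact h
      · exact absurd hxQ (hlast x h)
    · exact fun h => ⟨.inr (.inl h), hQ2Q x h⟩
end
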